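/- arXiv:2510.02892 — 3 statements merged into one kernel-verified Lean document; each statement's English description precedes it below -/
import Mathlib

section
/- Let α be a nonempty finite type, let π₀ be a probability distribution on α, and let g : α → ℝ satisfy g z > 0 for all z. Define the normalizer Z = ∑ z, g z * π₀ z and the distribution π⋆ z = g z * π₀ z / Z. Then Z > 0, and for every positive probability distribution π on α one has ∑ z, π₀ z * g z * Real.log (π z) ≤ ∑ z, π₀ z * g z * Real.log (π⋆ z). In other words, π⋆ maximizes the weighted log-likelihood objective π ↦ ∑ z, π₀ z * g z * log (π z) over positive probability distributions. -/
/-- Pointwise Gibbs inequality. -/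
theorem mul_log_le_mul_log_add_sub {p q : ℝ} (hp : 0 ≤ p) (hq : 0 < q) :
    p * Real.log q ≤ p * Real.log p + (q - p) := by
  rcases hp.eq_or_lt with rfl | hp
  · simpa using hq.le
  · have h := mul_le_mul_of_nonneg_left (Real.log_le_sub_one_of_pos (div_pos hq hp)) hp.le
    rw [Real.log_div hq.ne' hp.ne', mul_sub, mul_sub, mul_div_cancel₀ q hp.ne', mul_one] at h
    linarith

/-- **Gibbs' inequality** for finite sums. -/
theorem sum_mul_log_le_sum_mul_log_self {α : Type*} [Fintype α] {p q : α → ℝ}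
    (hp : ∀ z, 0 ≤ p z) (hq : ∀ z, 0 < q z) (hsum : ∑ z, q z ≤ ∑ z, p z) :
    ∑ z, p z * Real.log (q z) ≤ ∑ z, p z * Real.log (p z) := by
  have h := Finset.sum_le_sum fun z (_ : z ∈ Finset.univ) =>
    mul_log_le_mul_log_add_sub (hp z) (hq z)
  rw [Finset.sum_add_distrib, Finset.sum_sub_distrib] at h
  linarith

/-- Lemma 1 (existence of maximizer): the normalized reweighting
`π⋆ z = g z * π₀ z / Z` maximizes the weighted log-likelihood objective
`π ↦ ∑ z, π₀ z * g z * log (π z)` over positive probability distributions. -/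
theorem weighted_loglik_maximizer
    {α : Type*} [Fintype α] [Nonempty α]
    (π₀ : α → ℝ) (hπ₀_nonneg : ∀ z, 0 ≤ π₀ z) (hπ₀_sum : ∑ z, π₀ z = 1)
    (g : α → ℝ) (hg : ∀ z, 0 < g z)
    (Z : ℝ) (hZ : Z = ∑ z, g z * π₀ z)
    (πstar : α → ℝ) (hπstar : ∀ z, πstar z = g z * π₀ z / Z) :
    0 < Z ∧
      ∀ π : α → ℝ, (∀ z, 0 < π z) → (∑ z, π z = 1) →
        ∑ z, π₀ z * g z * Real.log (π z) ≤
          ∑ z, π₀ z * g z * Real.log (πstar z) := by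
  have hnonneg : ∀ z, 0 ≤ g z * π₀ z := fun z => mul_nonneg (hg z).le (hπ₀_nonneg z)
  have hZpos : 0 < Z := by
    obtain ⟨z, -, hz⟩ := Finset.exists_ne_zero_of_sum_ne_zero (hπ₀_sum ▸ one_ne_zero)
    rw [hZ]
    exact Finset.sum_pos' (fun z _ => hnonneg z)
      ⟨z, Finset.mem_univ z, mul_pos (hg z) ((hπ₀_nonneg z).lt_of_ne' hz)⟩
  refine ⟨hZpos, fun π hπ hπ_sum => ?_⟩
  have hstar_sum : ∑ z, πstar z = 1 := by
    simp_rw [hπstar, ← Finset.sum_div, ← hZ, div_self hZpos.ne']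
  have hstar_nonneg : ∀ z, 0 ≤ πstar z := fun z =>
    hπstar z ▸ div_nonneg (hnonneg z) hZpos.le
  have hweight : ∀ z, π₀ z * g z = Z * πstar z := fun z => by
    rw [hπstar, mul_div_cancel₀ _ hZpos.ne', mul_comm]
  simp_rw [hweight, mul_assoc, ← Finset.mul_sum]
  exact mul_le_mul_of_nonneg_left
    (sum_mul_log_le_sum_mul_log_self hstar_nonneg hπ (hπ_sum.trans hstar_sum.symm).le) hZpos.le
end

section
/- Let α be a nonempty finite type, let π₀ be a positive probability distribution on α, and let g : α → ℝ satisfy g z > 0 for all z. Define Z = ∑ z, g z * π₀ z and π⋆ z = g z * π₀ z / Z. Then for a positive probability distribution π on α, the equality ∑ z, π₀ z * g z * Real.log (π z) = ∑ z, π₀ z * g z * Real.log (π⋆ z) holds if and only if π = π⋆. In particular, π⋆ is the unique maximizer of the weighted log-likelihood objective over positive probability distributions. -/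
/-- The tangent-line bound `p * log (q / p) ≤ q - p`. -/
lemma mul_log_sub_log_le_sub {p q : ℝ} (hp : 0 < p) (hq : 0 < q) :
    p * (Real.log q - Real.log p) ≤ q - p := by
  rw [← Real.log_div hq.ne' hp.ne']
  calc p * Real.log (q / p) ≤ p * (q / p - 1) := by
        gcongr
        exact Real.log_le_sub_one_of_pos (div_pos hq hp)
    _ = q - p := by field_simp

/-- The tangent-line bound `p * log (q / p) ≤ q - p` is strict away from `q = p`. -/
lemma mul_log_sub_log_lt_sub {p q : ℝ} (hp : 0 < p) (hq : 0 < q) (hne : q ≠ p) :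
    p * (Real.log q - Real.log p) < q - p := by
  rw [← Real.log_div hq.ne' hp.ne']
  calc p * Real.log (q / p) < p * (q / p - 1) := by
        gcongr
        exact Real.log_lt_sub_one_of_pos (div_pos hq hp) (by rwa [Ne, div_eq_one_iff_eq hp.ne'])
    _ = q - p := by field_simp

/-- Equality case of the Gibbs inequality for positive vectors of equal total mass. -/
lemma eq_of_sum_mul_log_eq {α : Type*} [Fintype α] {p q : α → ℝ}
    (hp : ∀ z, 0 < p z) (hq : ∀ z, 0 < q z) (hsum : ∑ z, q z = ∑ z, p z)
    (h : ∑ z, p z * Real.log (q z) = ∑ z, p z * Real.log (p z)) : q = p := by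
  by_contra hne
  obtain ⟨a, ha⟩ := Function.ne_iff.mp hne
  have hlt : ∑ z, p z * (Real.log (q z) - Real.log (p z)) < ∑ z, (q z - p z) :=
    Finset.sum_lt_sum (fun z _ => mul_log_sub_log_le_sub (hp z) (hq z))
      ⟨a, Finset.mem_univ a, mul_log_sub_log_lt_sub (hp a) (hq a) ha⟩
  simp only [mul_sub, Finset.sum_sub_distrib] at hlt
  linarith

/-- Uniqueness part of Lemma 1: equality in the weighted Gibbs inequality
holds iff `π = π⋆`, so `π⋆` is the unique maximizer of the weighted
log-likelihood objective over positive probability distributions. -/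
theorem weighted_loglik_maximizer_unique
    {α : Type*} [Fintype α] [Nonempty α]
    (π₀ : α → ℝ) (hπ₀_pos : ∀ z, 0 < π₀ z) (hπ₀_sum : ∑ z, π₀ z = 1)
    (g : α → ℝ) (hg : ∀ z, 0 < g z)
    (Z : ℝ) (hZ : Z = ∑ z, g z * π₀ z)
    (πstar : α → ℝ) (hπstar : ∀ z, πstar z = g z * π₀ z / Z)
    (π : α → ℝ) (hπ_pos : ∀ z, 0 < π z) (hπ_sum : ∑ z, π z = 1) :
    (∑ z, π₀ z * g z * Real.log (π z) =
      ∑ z, π₀ z * g z * Real.log (πstar z)) ↔ π = πstar := by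
  refine ⟨fun h => ?_, fun h => by rw [h]⟩
  have hZ_pos : 0 < Z := hZ ▸ Finset.sum_pos (fun z _ => mul_pos (hg z) (hπ₀_pos z))
    Finset.univ_nonempty
  have hstar_pos : ∀ z, 0 < πstar z := fun z => by
    rw [hπstar]
    exact div_pos (mul_pos (hg z) (hπ₀_pos z)) hZ_pos
  have hstar_sum : ∑ z, πstar z = 1 := by
    simp_rw [hπstar]
    rw [← Finset.sum_div, ← hZ, div_self hZ_pos.ne']
  have hweight : ∀ z, π₀ z * g z = Z * πstar z := fun z => by
    rw [hπstar, mul_div_cancel₀ _ hZ_pos.ne', mul_comm]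
  simp_rw [hweight, mul_assoc, ← Finset.mul_sum] at h
  exact eq_of_sum_mul_log_eq hstar_pos hπ_pos (hπ_sum.trans hstar_sum.symm)
    (mul_left_cancel₀ hZ_pos.ne' h)
end

section
/- Let α be a nonempty finite type, let π₀ be a positive probability distribution on α, let β > 0, and let r_1, …, r_m : α → ℝ be a sequence of reward functions, with the convention r_0 = 0. Define the telescoping transforms g_j z = Real.exp ((r_j z - r_{j-1} z) / β) for j = 1, …, m, and recursively π_j z = g_j z * π_{j-1} z / (∑ w, g_j w * π_{j-1} w). Then for every z ∈ α, π_m z = Real.exp (r_m z / β) * π₀ z / (∑ w, Real.exp (r_m w / β) * π₀ w). That is, with this choice of reward transforms, the m-th iterate of the normalized reweighting iteration depends only on the most recent reward r_m and has the KL-regularized exponential-tilting form exp(r_m/β) · π₀ (up to normalization). -/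
/-- Telescoping identity in the proof of the Proposition (Appendix A.3): with
`g j z = exp ((r j z - r (j-1) z) / β)` and the convention `r 0 = 0`, the m-th
iterate of the normalized reweighting iteration is the exponential tilting of
`π₀` by the most recent reward `r m / β`. -/
theorem iterated_telescoping_reweighting
    {α : Type*} [Fintype α] [Nonempty α] (m : ℕ)
    (π₀ : α → ℝ) (hπ₀_pos : ∀ z, 0 < π₀ z) (hπ₀_sum : ∑ z, π₀ z = 1)
    (β : ℝ) (hβ : 0 < β)
    (r : ℕ → α → ℝ) (hr0 : ∀ z, r 0 z = 0)
    (g : ℕ → α → ℝ)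
    (hg : ∀ j, 1 ≤ j → j ≤ m → ∀ z, g j z = Real.exp ((r j z - r (j - 1) z) / β))
    (π : ℕ → α → ℝ) (hπ0 : π 0 = π₀)
    (hrec : ∀ j, 1 ≤ j → j ≤ m → ∀ z,
      π j z = g j z * π (j - 1) z / (∑ w, g j w * π (j - 1) w)) :
    ∀ z, π m z =
      Real.exp (r m z / β) * π₀ z /
        (∑ w, Real.exp (r m w / β) * π₀ w) := by
  induction m with
  | zero => simp [hπ0, hr0, hπ₀_sum]
  | succ n ih =>
    have ih := ih (fun j h₁ h₂ => hg j h₁ (by omega)) (fun j h₁ h₂ => hrec j h₁ (by omega))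
    have hZ : (∑ w, Real.exp (r n w / β) * π₀ w) ≠ 0 :=
      (Finset.sum_pos (fun w _ => mul_pos (Real.exp_pos _) (hπ₀_pos w))
        Finset.univ_nonempty).ne'
    have tilt : ∀ z, g (n + 1) z * π n z =
        Real.exp (r (n + 1) z / β) * π₀ z / ∑ w, Real.exp (r n w / β) * π₀ w := by
      intro z
      rw [hg (n + 1) (by omega) le_rfl z, ih z, Nat.add_sub_cancel, ← mul_div_assoc,
        ← mul_assoc, ← Real.exp_add, ← add_div, sub_add_cancel]
    intro z
    rw [hrec (n + 1) (by omega) le_rfl z, Nat.add_sub_cancel]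
    simp only [tilt]
    rw [← Finset.sum_div, div_div_div_cancel_right₀ hZ]
end
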